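/- Let H be a complex Hilbert space of dimension greater than one. Then the Stone spectrum Q(L(H)) of the lattice L(H) of closed subspaces of H is not compact. If moreover H is infinite-dimensional, then Q(L(H)) is not locally compact. -/

import Mathlib

/-- A filter base in an ordered set `L` with least element `⊥`:
a nonempty subset not containing `⊥` in which any two elements have a common lower bound. -/
def IsFilterBase {L : Type*} [PartialOrder L] [OrderBot L] (B : Set L) : Prop :=
  B.Nonempty ∧ ⊥ ∉ B ∧ ∀ a ∈ B, ∀ b ∈ B, ∃ c ∈ B, c ≤ a ∧ c ≤ b

/-- A quasipoint is a maximal filter base. -/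
def IsQuasipoint {L : Type*} [PartialOrder L] [OrderBot L] (B : Set L) : Prop :=
  IsFilterBase B ∧ ∀ C : Set L, IsFilterBase C → B ⊆ C → C = B

/-- The set of quasipoints of `L`. -/
def Quasipoint (L : Type*) [PartialOrder L] [OrderBot L] : Type _ :=
  {B : Set L // IsQuasipoint B}

/-- The basic (cl)open set of the Stone spectrum determined by `a : L`. -/
def Qset {L : Type*} [PartialOrder L] [OrderBot L] (a : L) : Set (Quasipoint L) :=
  {B | a ∈ B.1}

/-- The Stone topology on the set of quasipoints, generated by the sets `Qset a`. -/
instance {L : Type*} [PartialOrder L] [OrderBot L] : TopologicalSpace (Quasipoint L) :=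
  TopologicalSpace.generateFrom (Set.range (Qset : L → Set (Quasipoint L)))

/-- The lattice of closed subspaces of a Hilbert space, ordered by inclusion. -/
def ClosedSubspace (H : Type*) [NormedAddCommGroup H] [InnerProductSpace ℂ H] : Type _ :=
  {K : Submodule ℂ H // IsClosed (K : Set H)}

instance {H : Type*} [NormedAddCommGroup H] [InnerProductSpace ℂ H] :
    PartialOrder (ClosedSubspace H) :=
  inferInstanceAs (PartialOrder {K : Submodule ℂ H // IsClosed (K : Set H)})

instance {H : Type*} [NormedAddCommGroup H] [InnerProductSpace ℂ H] :
    OrderBot (ClosedSubspace H) where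
  bot := ⟨⊥, by simpa using (isClosed_singleton : IsClosed ({0} : Set H))⟩
  bot_le K := show (⊥ : Submodule ℂ H) ≤ K.1 from bot_le

/-!
For an atom `p`, the principal filter above `p` is a quasipoint. Let `Qset c` be compact with
`c ≠ ⊥`, and let `p ≤ c`. Quasipoints omitting `p` contain an element disjoint from `p`, so
`Qset c` is covered by `Qset p` and finitely many `Qset d` with `d` disjoint from `p`. Hence every
line in the subspace `c` lies in `p` or in one of the `d`. A complex vector space is not a finite
union of proper subspaces, so either `c ≤ p`, or `p ≤ c ≤ d` and `p = ⊥`. Thus `c` is a line.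

This excludes compactness in dimension greater than one. In infinite dimension, the orthogonal
complements of the finite-dimensional subspaces form a filter base; a quasipoint extending it
contains no line, hence has no compact neighbourhood.
-/

section PartialOrder

variable {L : Type*} [PartialOrder L] [OrderBot L]

theorem IsFilterBase.not_disjoint {B : Set L} (hB : IsFilterBase B) {a b : L} (ha : a ∈ B)
    (hb : b ∈ B) : ¬ Disjoint a b := by
  intro hab
  obtain ⟨c, hc, hca, hcb⟩ := hB.2.2 a ha b hb
  exact hB.2.1 (le_bot_iff.1 (hab hca hcb) ▸ hc)

theorem IsFilterBase.upperClosure {B : Set L} (hB : IsFilterBase B) :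
    IsFilterBase (upperClosure B : Set L) := by
  refine ⟨hB.1.mono subset_upperClosure, ?_, ?_⟩
  · rintro ⟨b, hb, hb_bot⟩
    exact hB.2.1 (le_bot_iff.1 hb_bot ▸ hb)
  · rintro d ⟨a, ha, had⟩ e ⟨b, hb, hbe⟩
    obtain ⟨c, hc, hca, hcb⟩ := hB.2.2 a ha b hb
    exact ⟨c, subset_upperClosure hc, hca.trans had, hcb.trans hbe⟩

theorem IsFilterBase.sUnion {S : Set (Set L)} (hS : S.Nonempty) (hdir : DirectedOn (· ⊆ ·) S)
    (hbase : ∀ B ∈ S, IsFilterBase B) : IsFilterBase (⋃₀ S) := by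
  refine ⟨?_, ?_, ?_⟩
  · obtain ⟨B, hB⟩ := hS
    exact (hbase B hB).1.mono (Set.subset_sUnion_of_mem hB)
  · rintro ⟨B, hB, hbot⟩
    exact (hbase B hB).2.1 hbot
  · rintro a ⟨A, hA, ha⟩ b ⟨B, hB, hb⟩
    obtain ⟨C, hC, hAC, hBC⟩ := hdir A hA B hB
    obtain ⟨c, hc, hca, hcb⟩ := (hbase C hC).2.2 a (hAC ha) b (hBC hb)
    exact ⟨c, ⟨C, hC, hc⟩, hca, hcb⟩

theorem IsFilterBase.exists_isQuasipoint_superset {F : Set L} (hF : IsFilterBase F) :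
    ∃ B : Set L, IsQuasipoint B ∧ F ⊆ B := by
  obtain ⟨B, hFB, hB⟩ := zorn_subset_nonempty {B : Set L | IsFilterBase B}
    (fun S hS hchain hne =>
      ⟨⋃₀ S, .sUnion hne hchain.directedOn hS, fun _ => Set.subset_sUnion_of_mem⟩) F hF
  exact ⟨B, ⟨hB.prop, fun C hC hBC => (hB.eq_of_subset hC hBC).symm⟩, hFB⟩

theorem IsQuasipoint.isUpperSet {B : Set L} (hB : IsQuasipoint B) : IsUpperSet B := by
  rw [← hB.2 _ hB.1.upperClosure subset_upperClosure]
  exact (upperClosure B).upper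

theorem isQuasipoint_Ici {p : L} (hp : IsAtom p) : IsQuasipoint (Set.Ici p) := by
  refine ⟨⟨Set.nonempty_Ici, fun h => hp.1 (le_bot_iff.1 h),
    fun a ha b hb => ⟨p, Set.self_mem_Ici, ha, hb⟩⟩, fun C hC hpC => ?_⟩
  refine Set.Subset.antisymm (fun a ha => ?_) hpC
  obtain ⟨c, hcC, hcp, hca⟩ := hC.2.2 p (hpC Set.self_mem_Ici) a ha
  obtain rfl | rfl := hp.le_iff.1 hcp
  · exact absurd hcC hC.2.1
  · exact hca

theorem isTopologicalBasis_range_Qset :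
    TopologicalSpace.IsTopologicalBasis (Set.range (Qset : L → Set (Quasipoint L))) where
  exists_subset_inter := by
    rintro _ ⟨a, rfl⟩ _ ⟨b, rfl⟩ B ⟨ha, hb⟩
    obtain ⟨c, hc, hca, hcb⟩ := B.2.1.2.2 a ha b hb
    exact ⟨Qset c, ⟨c, rfl⟩, hc, fun C hC => ⟨C.2.isUpperSet hca hC, C.2.isUpperSet hcb hC⟩⟩
  sUnion_eq := by
    refine Set.eq_univ_of_forall fun B => ?_
    obtain ⟨a, ha⟩ := B.2.1.1
    exact ⟨Qset a, ⟨a, rfl⟩, ha⟩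
  eq_generateFrom := rfl

theorem isOpen_Qset (a : L) : IsOpen (Qset a) :=
  isTopologicalBasis_range_Qset.isOpen ⟨a, rfl⟩

end PartialOrder

section SemilatticeInf

variable {L : Type*} [SemilatticeInf L] [OrderBot L]

theorem IsFilterBase.image_inf {B : Set L} (hB : IsFilterBase B) {a : L}
    (ha : ∀ b ∈ B, ¬ Disjoint a b) : IsFilterBase ((a ⊓ ·) '' B) := by
  refine ⟨hB.1.image _, ?_, ?_⟩
  · rintro ⟨b, hb, hab⟩
    exact ha b hb (disjoint_iff.2 hab)
  · rintro _ ⟨b, hb, rfl⟩ _ ⟨c, hc, rfl⟩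
    obtain ⟨d, hd, hdb, hdc⟩ := hB.2.2 b hb c hc
    exact ⟨a ⊓ d, ⟨d, hd, rfl⟩, inf_le_inf_left a hdb, inf_le_inf_left a hdc⟩

theorem IsQuasipoint.notMem_iff_exists_disjoint {B : Set L} (hB : IsQuasipoint B) {a : L} :
    a ∉ B ↔ ∃ b ∈ B, Disjoint a b := by
  refine ⟨fun ha => ?_, fun ⟨b, hb, hab⟩ ha => hB.1.not_disjoint ha hb hab⟩
  contrapose! ha
  rw [← hB.2 _ (hB.1.image_inf ha).upperClosure
    fun b hb => ⟨a ⊓ b, ⟨b, hb, rfl⟩, inf_le_right⟩]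
  obtain ⟨b, hb⟩ := hB.1.1
  exact ⟨a ⊓ b, ⟨b, hb, rfl⟩, inf_le_left⟩

theorem compl_Qset (a : L) : (Qset a)ᶜ = ⋃ b ∈ {b | Disjoint a b}, Qset b := by
  ext B
  simp only [Set.mem_iUnion₂, Set.mem_ofPred_eq, exists_prop]
  exact B.2.notMem_iff_exists_disjoint.trans (exists_congr fun _ => and_comm)

theorem isClosed_Qset (a : L) : IsClosed (Qset a) := by
  rw [← isOpen_compl_iff, compl_Qset]
  exact isOpen_biUnion fun b _ => isOpen_Qset b

theorem exists_finite_disjoint_cover {K : Set (Quasipoint L)} (hK : IsCompact K) (p : L) :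
    ∃ t : Set L, t.Finite ∧ (∀ d ∈ t, Disjoint p d) ∧ K ⊆ Qset p ∪ ⋃ d ∈ t, Qset d := by
  obtain ⟨t, ht_disj, ht_fin, ht_cover⟩ := (hK.diff (isOpen_Qset p)).elim_finite_subcover_image
    (fun d _ => isOpen_Qset d) ((Set.sdiff_subset_compl _ _).trans (compl_Qset p).subset)
  exact ⟨t, ht_fin, ht_disj, Set.sdiff_subset_iff.1 ht_cover⟩

theorem isAtom_of_isCompact_Qset_of_exists_le {c : L} (hc : c ≠ ⊥)
    (hcover : ∀ t : Set L, t.Finite → (∀ q, IsAtom q → q ≤ c → ∃ d ∈ t, q ≤ d) → ∃ d ∈ t, c ≤ d)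
    (hK : IsCompact (Qset c)) : IsAtom c := by
  refine ⟨hc, fun p hpc => ?_⟩
  obtain ⟨t, ht_fin, ht_disj, ht_cover⟩ := exists_finite_disjoint_cover hK p
  have hatoms : ∀ q, IsAtom q → q ≤ c → ∃ d ∈ insert p t, q ≤ d := fun q hq hqc => by
    let Q : Quasipoint L := ⟨Set.Ici q, isQuasipoint_Ici hq⟩
    rcases ht_cover (show Q ∈ Qset c from hqc) with hp | hd
    · exact ⟨p, Set.mem_insert p t, hp⟩
    · obtain ⟨d, hdt, hqd⟩ := Set.mem_iUnion₂.1 hd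
      exact ⟨d, Set.mem_insert_of_mem p hdt, hqd⟩
  obtain ⟨d, rfl | hdt, hcd⟩ := hcover _ (ht_fin.insert p) hatoms
  · exact absurd hcd hpc.not_ge
  · exact (ht_disj d hdt).eq_bot_of_le (hpc.le.trans hcd)

theorem exists_mem_isCompact_Qset [WeaklyLocallyCompactSpace (Quasipoint L)] (B : Quasipoint L) :
    ∃ c ∈ B.1, IsCompact (Qset c) := by
  obtain ⟨K, hK, hKB⟩ := exists_compact_mem_nhds B
  obtain ⟨_, ⟨c, rfl⟩, hcB, hcK⟩ := isTopologicalBasis_range_Qset.mem_nhds_iff.1 hKB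
  exact ⟨c, hcB, hK.of_isClosed_subset (isClosed_Qset c) hcK⟩

end SemilatticeInf

theorem exists_le_of_subset_biUnion {k E : Type*} [DivisionRing k] [Infinite k] [AddCommGroup E]
    [Module k E] {p : Submodule k E} {s : Set (Submodule k E)} (hs : s.Finite)
    (hps : (p : Set E) ⊆ ⋃ q ∈ s, (q : Set E)) : ∃ q ∈ s, p ≤ q := by
  have : Finite s := hs
  obtain ⟨q, hq⟩ := Subspace.exists_eq_top_of_iUnion_eq_univ
    (p := fun q : s => q.1.comap p.subtype) <| Set.eq_univ_of_forall fun x => by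
      obtain ⟨q, hqs, hxq⟩ := Set.mem_iUnion₂.1 (hps x.2)
      exact Set.mem_iUnion.2 ⟨⟨q, hqs⟩, hxq⟩
  exact ⟨q, q.2, Submodule.comap_subtype_eq_top.1 hq⟩

namespace ClosedSubspace

variable {H : Type*} [NormedAddCommGroup H] [InnerProductSpace ℂ H]

instance : SemilatticeInf (ClosedSubspace H) where
  inf a b := ⟨a.1 ⊓ b.1, a.2.inter b.2⟩
  inf_le_left a b := (inf_le_left : a.1 ⊓ b.1 ≤ a.1)
  inf_le_right a b := (inf_le_right : a.1 ⊓ b.1 ≤ b.1)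
  le_inf a b c hab hac := (le_inf hab hac : a.1 ≤ b.1 ⊓ c.1)

/-- The line spanned by `x`, or the zero subspace if `x = 0`. -/
def span (x : H) : ClosedSubspace H :=
  ⟨Submodule.span ℂ {x}, Submodule.closed_of_finiteDimensional _⟩

theorem span_le_iff {x : H} {a : ClosedSubspace H} : span x ≤ a ↔ x ∈ a.1 :=
  Submodule.span_singleton_le_iff_mem x a.1

theorem isAtom_span {x : H} (hx : x ≠ 0) : IsAtom (span x) := by
  have hatom : IsAtom (Submodule.span ℂ {x}) := nonzero_span_atom x hx
  exact ⟨fun h => hatom.1 (congrArg Subtype.val h), fun b hb => Subtype.ext (hatom.2 b.1 hb)⟩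

theorem eq_span_of_isAtom {c : ClosedSubspace H} (hc : IsAtom c) {x : H} (hx : x ≠ 0)
    (hxc : x ∈ c.1) : c = span x :=
  ((hc.le_iff_eq (isAtom_span hx).1).1 (span_le_iff.2 hxc)).symm

theorem finiteDimensional_of_isAtom {c : ClosedSubspace H} (hc : IsAtom c) :
    FiniteDimensional ℂ c.1 := by
  have hc_ne : c.1 ≠ ⊥ := fun h => hc.1 (Subtype.ext h)
  obtain ⟨x, hxc, hx⟩ := c.1.exists_mem_ne_zero_of_ne_bot hc_ne
  rw [eq_span_of_isAtom hc hx hxc]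
  exact inferInstanceAs (FiniteDimensional ℂ (Submodule.span ℂ {x}))

theorem exists_le_of_forall_isAtom {c : ClosedSubspace H} (hc : c ≠ ⊥)
    {t : Set (ClosedSubspace H)} (ht : t.Finite)
    (hcover : ∀ q, IsAtom q → q ≤ c → ∃ d ∈ t, q ≤ d) : ∃ d ∈ t, c ≤ d := by
  have hsub : (c.1 : Set H) ⊆ ⋃ q ∈ Subtype.val '' t, (q : Set H) := fun x hxc => by
    obtain ⟨y, hyc, hxy, hy⟩ : ∃ y ∈ c.1, x ∈ Submodule.span ℂ {y} ∧ y ≠ 0 := by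
      rcases eq_or_ne x 0 with rfl | hx
      · obtain ⟨y, hyc, hy⟩ :=
          c.1.exists_mem_ne_zero_of_ne_bot fun h => hc (Subtype.ext h)
        exact ⟨y, hyc, Submodule.zero_mem _, hy⟩
      · exact ⟨x, hxc, Submodule.mem_span_singleton_self x, hx⟩
    obtain ⟨d, hdt, hyd⟩ := hcover (span y) (isAtom_span hy) (span_le_iff.2 hyc)
    exact Set.mem_iUnion₂.2 ⟨d.1, ⟨d, hdt, rfl⟩, hyd hxy⟩
  obtain ⟨_, ⟨d, hdt, rfl⟩, hcd⟩ := exists_le_of_subset_biUnion (ht.image Subtype.val) hsub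
  exact ⟨d, hdt, hcd⟩

theorem isAtom_of_isCompact_Qset {c : ClosedSubspace H} (hc : c ≠ ⊥) (hK : IsCompact (Qset c)) :
    IsAtom c :=
  isAtom_of_isCompact_Qset_of_exists_le hc (fun _ => exists_le_of_forall_isAtom hc) hK

theorem not_compactSpace_quasipoint (hdim : ∃ x y : H, LinearIndependent ℂ ![x, y]) :
    ¬ CompactSpace (Quasipoint (ClosedSubspace H)) := by
  intro hcompact
  obtain ⟨x, y, hxy⟩ := hdim
  have hx : x ≠ 0 := hxy.ne_zero 0
  let whole : ClosedSubspace H := ⟨⊤, isClosed_univ⟩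
  have hwhole_ne : whole ≠ ⊥ := ne_bot_of_le_ne_bot (isAtom_span hx).1
    (span_le_iff.2 (Submodule.mem_top : x ∈ ⊤))
  have hwhole : whole = span x :=
    eq_span_of_isAtom (isAtom_of_isCompact_Qset hwhole_ne (isClosed_Qset whole).isCompact) hx
      Submodule.mem_top
  have hy : y ∈ (span x).1 := hwhole ▸ Submodule.mem_top
  obtain ⟨r, hr⟩ := Submodule.mem_span_singleton.1 hy
  exact (LinearIndependent.pair_iff' hx).1 hxy r hr

/-- The orthogonal complement of a subspace, itself not required to be closed. -/
noncomputable def orthogonal (F : Submodule ℂ H) : ClosedSubspace H :=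
  ⟨Fᗮ, F.isClosed_orthogonal⟩

theorem disjoint_orthogonal (c : ClosedSubspace H) : Disjoint c (orthogonal c.1) :=
  fun _ hd hd' => c.1.orthogonal_disjoint hd hd'

theorem isFilterBase_orthogonal_finiteDimensional (hinf : ¬ FiniteDimensional ℂ H) :
    IsFilterBase (orthogonal '' {F : Submodule ℂ H | FiniteDimensional ℂ F}) := by
  refine ⟨⟨_, ⊥, inferInstanceAs (FiniteDimensional ℂ (⊥ : Submodule ℂ H)), rfl⟩, ?_, ?_⟩
  · rintro ⟨F, hF : FiniteDimensional ℂ F, hF_bot⟩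
    obtain rfl : F = ⊤ := F.orthogonal_eq_bot_iff.1 (congrArg Subtype.val hF_bot)
    exact hinf Submodule.topEquiv.finiteDimensional
  · rintro _ ⟨F, hF : FiniteDimensional ℂ F, rfl⟩ _ ⟨G, hG : FiniteDimensional ℂ G, rfl⟩
    exact ⟨orthogonal (F ⊔ G), ⟨F ⊔ G, F.finiteDimensional_sup G, rfl⟩,
      Submodule.orthogonal_le le_sup_left, Submodule.orthogonal_le le_sup_right⟩

theorem not_weaklyLocallyCompactSpace_quasipoint (hinf : ¬ FiniteDimensional ℂ H) :
    ¬ WeaklyLocallyCompactSpace (Quasipoint (ClosedSubspace H)) := by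
  intro hloc
  obtain ⟨B, hB, horthB⟩ :=
    (isFilterBase_orthogonal_finiteDimensional hinf).exists_isQuasipoint_superset
  obtain ⟨c, hcB, hK⟩ := exists_mem_isCompact_Qset ⟨B, hB⟩
  have hc : c ≠ ⊥ := fun h => hB.1.2.1 (h ▸ hcB)
  have hc_fin : FiniteDimensional ℂ c.1 :=
    finiteDimensional_of_isAtom (isAtom_of_isCompact_Qset hc hK)
  exact hB.1.not_disjoint hcB (horthB ⟨c.1, hc_fin, rfl⟩) (disjoint_orthogonal c)

end ClosedSubspace

theorem stoneSpectrum_closedSubspace_not_compact_general {H : Type*} [NormedAddCommGroup H]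
    [InnerProductSpace ℂ H] (hdim : ∃ x y : H, LinearIndependent ℂ ![x, y]) :
    ¬ CompactSpace (Quasipoint (ClosedSubspace H)) ∧
    (¬ FiniteDimensional ℂ H → ¬ LocallyCompactSpace (Quasipoint (ClosedSubspace H))) :=
  ⟨ClosedSubspace.not_compactSpace_quasipoint hdim, fun hinf _ =>
    ClosedSubspace.not_weaklyLocallyCompactSpace_quasipoint hinf inferInstance⟩

/-- If `dim H > 1`, the Stone spectrum of the lattice of closed subspaces of `H` is not compact;
if moreover `H` is infinite-dimensional, it is not even locally compact. -/
theorem stoneSpectrum_closedSubspace_not_compact {H : Type*} [NormedAddCommGroup H]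
    [InnerProductSpace ℂ H] [CompleteSpace H]
    (hdim : ∃ x y : H, LinearIndependent ℂ ![x, y]) :
    ¬ CompactSpace (Quasipoint (ClosedSubspace H)) ∧
    (¬ FiniteDimensional ℂ H → ¬ LocallyCompactSpace (Quasipoint (ClosedSubspace H))) :=
  stoneSpectrum_closedSubspace_not_compact_general hdim
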